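/- Let c > 0 with 1/c an integer, let ℓ, s, t > 0 be integers, let d > 0, and let ε > 0 satisfy (2 + 1/c)^{(t+1)(ℓ+t)}·ε < d. Let G be an ε-sparse (ε|G|^{1−c}, ε|G|)-coherent graph, and for i = 1, 2 let L_i be a levelling in G of height s (for i=1) and t (for i=2), with heart H_i, apex a_i, and base B_i, such that: V(L_1) ∩ V(L_2) = {a_1} ∩ {a_2}; V(L_2)∖{a_2} is anticomplete to H_1, and if a_1 ≠ a_2 then a_2 is anticomplete to H_1; and |B_i| ≥ d|G| for i = 1, 2. Then there is an induced path (or induced cycle, if a_1 = a_2) of length ℓ + s + t between a_1 and a_2 with vertex set contained in H_1 ∪ B_1 ∪ H_2 ∪ B_2. -/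

import Mathlib

/-- (L 0, ..., L k) is a levelling in G: the sets are pairwise disjoint, |L 0| = 1,
each L (i-1) covers L i, and L 0 ∪ ... ∪ L (i-2) is anticomplete to L i. -/
def IsLevelling {V : Type} (G : SimpleGraph V) (L : ℕ → Finset V) (k : ℕ) : Prop :=
  1 ≤ k ∧ (L 0).card = 1 ∧
  (∀ i j, i < j → j ≤ k → Disjoint (L i) (L j)) ∧
  (∀ i, 1 ≤ i → i ≤ k → ∀ v ∈ L i, ∃ u ∈ L (i - 1), G.Adj u v) ∧
  (∀ i, 2 ≤ i → i ≤ k → ∀ j, j ≤ i - 2 → ∀ u ∈ L j, ∀ v ∈ L i, ¬ G.Adj u v)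

/-!
Some level `M j` with `1 ≤ j` sees a large set `D` of vertices of the base of `L` that no earlier
level of `M` sees. Adding the vertices of the last level of the heart of `L` one at a time cuts `D`
into layers of nearly equal size, so that each vertex of a layer has a neighbour in the heart that
sees none of the earlier layers. It then suffices to find a chordless path of prescribed length
from `M j` through `D` that only moves to later layers: together with a descent of `M` from its
first vertex and a descent of `L` from its last vertex it is the required path or cycle.

That path is built one vertex at a time. Since large sets are not anticomplete to sets of size
`ε * n ^ (1 - c)`, moving up by one layer allows one to keep only a fraction `n ^ (-c)` of the
possible starting vertices and still reach most of the next layer. After `⌈1 / c⌉` layers a single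
starting vertex `d` remains, from which many vertices are reached. It becomes the next vertex of
the path, and its neighbours are discarded except as successors of `d`; by sparsity this costs
little.
-/

open Finset Relation

section Walks

variable {V : Type*} {G : SimpleGraph V} {u v w : V}

lemma isPath_append {p : G.Walk u v} {q : G.Walk v w} (hp : p.IsPath) (hq : q.IsPath)
    (h : ∀ x ∈ p.support, x ∈ q.support → x = v) : (p.append q).IsPath := by
  have hv : v ∉ q.support.tail := by
    have := hq.support_nodup
    rw [← q.cons_tail_support] at this
    exact (List.nodup_cons.1 this).1
  rw [SimpleGraph.Walk.isPath_def, SimpleGraph.Walk.support_append, List.nodup_append']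
  refine ⟨hp.support_nodup, hq.support_nodup.tail, fun x hxp hxq => hv ?_⟩
  exact h x hxp (List.mem_of_mem_tail hxq) ▸ hxq

lemma isCycle_append {p : G.Walk u v} {q : G.Walk v u} (hp : p.IsPath) (hq : q.IsPath)
    (h : ∀ x ∈ p.support, x ∈ q.support → x = u ∨ x = v) (hlen : 1 < q.length) :
    (p.append q).IsCycle := by
  refine hp.isCycle_append hq (fun x hxp hxq => ?_) (.inr hlen)
  have hp' := hp.support_nodup
  have hq' := hq.support_nodup
  rw [← SimpleGraph.Walk.cons_tail_support, List.nodup_cons] at hp' hq'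
  rcases h x (List.mem_of_mem_tail hxp) (List.mem_of_mem_tail hxq) with rfl | rfl
  · exact hp'.1 hxp
  · exact hq'.1 hxq

lemma isChordless_append {p : G.Walk u v} {q : G.Walk v w} (hp : p.IsChordless)
    (hq : q.IsChordless)
    (h : ∀ x ∈ p.support, ∀ y ∈ q.support, G.Adj x y → x ∈ q.support ∨ y ∈ p.support) :
    (p.append q).IsChordless := by
  rw [SimpleGraph.Walk.isChordless_iff_forall_mem_edges] at *
  have cross : ∀ x ∈ p.support, ∀ y ∈ q.support, G.Adj x y → s(x, y) ∈ (p.append q).edges := by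
    intro x hx y hy hxy
    rw [SimpleGraph.Walk.edges_append, List.mem_append]
    exact (h x hx y hy hxy).symm.imp (hp hx · hxy) (hq · hy hxy)
  intro x y hx hy hxy
  rw [SimpleGraph.Walk.mem_support_append_iff] at hx hy
  rcases hx with hx | hx <;> rcases hy with hy | hy
  · simp [hp hx hy hxy]
  · exact cross x hx y hy hxy
  · exact Sym2.eq_swap ▸ cross y hy x hx hxy.symm
  · simp [hq hx hy hxy]

lemma isChordless_cons {p : G.Walk v w} (huv : G.Adj u v) (hp : p.IsChordless)
    (h : ∀ x ∈ p.support, G.Adj u x → x = v) : (p.cons huv).IsChordless := by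
  refine isChordless_append huv.isChordless_toWalk hp fun x hx y hy hxy => ?_
  simp only [SimpleGraph.Adj.support_toWalk, List.mem_cons, List.not_mem_nil, or_false] at hx ⊢
  rcases hx with rfl | rfl
  · exact .inr (.inr (h y hy hxy))
  · exact .inl p.start_mem_support

lemma isChordless_reverse {p : G.Walk u v} (hp : p.IsChordless) : p.reverse.IsChordless := by
  simpa [SimpleGraph.Walk.isChordless_iff_forall_mem_edges] using hp

end Walks

section Counting

lemma exists_subset_card_mul_sum_le {ι R : Type*} [CommRing R] [LinearOrder R]
    [IsStrictOrderedRing R] (w : ι → R) (E : Finset ι) {m : ℕ} (hm : m ≤ #E) :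
    ∃ E' ⊆ E, #E' = m ∧ m * ∑ e ∈ E, w e ≤ #E * ∑ e ∈ E', w e := by
  classical
  induction E using Finset.strongInduction with
  | H E ih =>
    rcases hm.eq_or_lt with rfl | hlt
    · exact ⟨E, Subset.rfl, rfl, le_rfl⟩
    -- Dropping an element of least weight does not decrease the average.
    obtain ⟨e, he, hmin⟩ := E.exists_min_image w (card_pos.1 (by omega))
    have hcard : #(E.erase e) + 1 = #E := card_erase_add_one he
    obtain ⟨E', hE', hE'm, hsum⟩ := ih _ (erase_ssubset he) (by omega)
    refine ⟨E', hE'.trans (erase_subset _ _), hE'm, ?_⟩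
    rcases Nat.eq_zero_or_pos m with rfl | hm0
    · simp [card_eq_zero.1 hE'm]
    set k := #(E.erase e) with hk
    have hk0 : (0 : R) < k := by exact_mod_cast (by omega : 0 < k)
    have hmin_le : k * w e ≤ ∑ x ∈ E.erase e, w x := by
      simpa [hk] using card_nsmul_le_sum (E.erase e) w (w e)
        fun x hx => hmin x (mem_of_mem_erase hx)
    rw [← add_sum_erase E w he, ← hcard, Nat.cast_add_one]
    refine le_of_mul_le_mul_left ?_ hk0
    calc k * (m * (w e + ∑ x ∈ E.erase e, w x))
        = m * (k * w e + k * ∑ x ∈ E.erase e, w x) := by ring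
      _ ≤ m * (∑ x ∈ E.erase e, w x + k * ∑ x ∈ E.erase e, w x) := by gcongr
      _ = (k + 1) * (m * ∑ x ∈ E.erase e, w x) := by ring
      _ ≤ (k + 1) * (k * ∑ x ∈ E', w x) := by gcongr
      _ = k * ((k + 1) * ∑ x ∈ E', w x) := by ring

lemma exists_subset_card_mul_card_biUnion_le {ι α : Type*} [DecidableEq α]
    (f : ι → Finset α) (E : Finset ι) {m : ℕ} (hm : m ≤ #E) :
    ∃ E' ⊆ E, #E' = m ∧ m * #(E.biUnion f) ≤ #E * #(E'.biUnion f) := by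
  let _ : DecidableEq ι := Classical.decEq ι
  have hchoice : ∀ r ∈ E.biUnion f, ∃ e ∈ E, r ∈ f e := fun r hr => mem_biUnion.1 hr
  rcases E.eq_empty_or_nonempty with rfl | ⟨e₀, -⟩
  · exact ⟨∅, Subset.rfl, by simp_all, by simp⟩
  have : Nonempty ι := ⟨e₀⟩
  choose! g hgE hgf using hchoice
  obtain ⟨E', hE', hcard, hsum⟩ :=
    exists_subset_card_mul_sum_le (R := ℤ) (fun e => #{r ∈ E.biUnion f | g r = e}) E hm
  refine ⟨E', hE', hcard, ?_⟩
  norm_cast at hsum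
  rw [sum_card_fiberwise_eq_card_filter, sum_card_fiberwise_eq_card_filter,
    filter_true_of_mem hgE] at hsum
  refine hsum.trans (Nat.mul_le_mul_left _ (card_le_card fun r hr => ?_))
  rw [mem_filter] at hr
  exact mem_biUnion.2 ⟨g r, hr.2, hgf r hr.1⟩

lemma exists_subset_card_le_div_le_card_biUnion {ι α : Type*} [DecidableEq α]
    (f : ι → Finset α) (E : Finset ι) {m : ℕ} {u η : ℝ} (hm : 0 < m) (hu : 1 ≤ u) (hη : 0 ≤ η)
    (hE : #E ≤ 2 * u * m) (hf : 2 * η ≤ #(E.biUnion f)) :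
    ∃ E' ⊆ E, #E' ≤ m ∧ η / u ≤ #(E'.biUnion f) := by
  rcases le_or_gt (#E) m with hle | hlt
  · exact ⟨E, Subset.rfl, hle, (div_le_self hη hu).trans (by linarith)⟩
  obtain ⟨E', hE', hcard, hmul⟩ := exists_subset_card_mul_card_biUnion_le f E hlt.le
  refine ⟨E', hE', hcard.le, (div_le_iff₀ (by positivity)).2 ?_⟩
  have hm0 : (0 : ℝ) < 2 * m := by positivity
  refine le_of_mul_le_mul_left ?_ hm0
  calc 2 * m * η = m * (2 * η) := by ring
    _ ≤ m * #(E.biUnion f) := by gcongr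
    _ ≤ #E * #(E'.biUnion f) := by exact_mod_cast hmul
    _ ≤ 2 * u * m * #(E'.biUnion f) := by gcongr
    _ = 2 * m * (#(E'.biUnion f) * u) := by ring

lemma exists_le_card_filter_first {α : Type*} [DecidableEq α] (f : ℕ → Finset α) {t : ℕ}
    {K : ℝ} (ht : 0 < t) (hK : t * K + #(f 0) ≤ #(f t)) :
    ∃ j ∈ Icc 1 t, K ≤ #{b ∈ f j | ∀ i < j, b ∉ f i} := by
  set F : ℕ → Finset α := fun j => {b ∈ f j | ∀ i < j, b ∉ f i}
  have hcover : f t ⊆ (range (t + 1)).biUnion F := by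
    intro b hb
    have hex : ∃ j, b ∈ f j := ⟨t, hb⟩
    exact mem_biUnion.2 ⟨Nat.find hex, mem_range_succ_iff.2 (Nat.find_min' hex hb),
      mem_filter.2 ⟨Nat.find_spec hex, fun _ => Nat.find_min hex⟩⟩
  have hcard : #(f t) ≤ ∑ j ∈ range t, #(F (j + 1)) + #(f 0) := by
    calc #(f t) ≤ ∑ j ∈ range (t + 1), #(F j) := (card_le_card hcover).trans card_biUnion_le
      _ = ∑ j ∈ range t, #(F (j + 1)) + #(F 0) := sum_range_succ' _ _
      _ ≤ _ := by gcongr; exact filter_subset _ _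
  rify at hcard
  obtain ⟨j, hj, hle⟩ := exists_le_of_sum_le (f := fun _ => K)
    (g := fun j => (#(F (j + 1)) : ℝ)) (nonempty_range_iff.2 ht.ne')
    (by simp only [sum_const, card_range, nsmul_eq_mul]; linarith)
  exact ⟨j + 1, mem_Icc.2 ⟨by omega, mem_range.1 hj⟩, hle⟩

lemma ceil_pow_succ_le {u : ℝ} (hu : 1 ≤ u) (k : ℕ) :
    (⌈u ^ (k + 1)⌉₊ : ℝ) ≤ 2 * u * ⌈u ^ k⌉₊ := by
  have hone : 1 ≤ u ^ (k + 1) := one_le_pow₀ hu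
  calc (⌈u ^ (k + 1)⌉₊ : ℝ) ≤ 2 * u ^ (k + 1) := Nat.ceil_le_two_mul (by linarith)
    _ = 2 * u * u ^ k := by ring
    _ ≤ 2 * u * ⌈u ^ k⌉₊ := by gcongr; exact Nat.le_ceil _

end Counting

section Density

variable {V : Type*} {G : SimpleGraph V}

/-- `G` is `(α, β)`-coherent: it has no disjoint anticomplete pair of sets of sizes at least `α`
and `β`. -/
def IsCoherent (G : SimpleGraph V) (α β : ℝ) : Prop :=
  ¬ ∃ A B : Finset V, Disjoint A B ∧ (∀ a ∈ A, ∀ b ∈ B, ¬ G.Adj a b) ∧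
    α ≤ (#A : ℝ) ∧ β ≤ (#B : ℝ)

variable [DecidableRel G.Adj]

/-- The vertices of `D` with a neighbour in `X`. -/
def coveredBy (G : SimpleGraph V) [DecidableRel G.Adj] (X D : Finset V) : Finset V :=
  {d ∈ D | ∃ x ∈ X, G.Adj x d}

lemma mem_coveredBy {X D : Finset V} {d : V} :
    d ∈ coveredBy G X D ↔ d ∈ D ∧ ∃ x ∈ X, G.Adj x d :=
  mem_filter

lemma coveredBy_eq_self {X D : Finset V} (h : ∀ d ∈ D, ∃ x ∈ X, G.Adj x d) :
    coveredBy G X D = D :=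
  filter_true_of_mem h

lemma IsCoherent.card_sub_lt_card_coveredBy {α β : ℝ} (h : IsCoherent G α β)
    {A B : Finset V} (hAB : Disjoint A B) (hA : α ≤ #A) : #B - β < #(coveredBy G A B) := by
  classical
  have hlt : (#(B \ coveredBy G A B) : ℝ) < β := by
    by_contra! hβ
    refine h ⟨A, B \ coveredBy G A B, hAB.mono_right sdiff_subset, fun a ha b hb hab => ?_, hA, hβ⟩
    obtain ⟨hbB, hb⟩ := mem_sdiff.1 hb
    exact hb (mem_coveredBy.2 ⟨hbB, a, ha, hab⟩)
  have hsplit : #(B \ coveredBy G A B) + #(coveredBy G A B) = #B :=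
    card_sdiff_add_card_eq_card (filter_subset _ _)
  rify at hsplit
  linarith

variable [Fintype V]

lemma card_filter_adj_le_degree (v : V) (S : Finset V) :
    #{w ∈ S | G.Adj v w} ≤ G.degree v :=
  card_le_card fun w hw => (G.mem_neighborFinset v w).2 (mem_filter.1 hw).2

lemma card_le_card_filter_not_adj_add_degree (v : V) (S : Finset V) :
    #S ≤ #{w ∈ S | ¬ G.Adj v w} + G.degree v := by
  have := card_filter_add_card_filter_not (s := S) (G.Adj v ·)
  have := card_filter_adj_le_degree (G := G) v S
  omega

end Density

section Reachability

variable {V : Type*} {G : SimpleGraph V} {rank : V → ℕ} {S : Finset V}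

/-- A step along an edge of `G` that increases `rank` and ends in `S`. -/
def AscStep (G : SimpleGraph V) (rank : V → ℕ) (S : Finset V) (v w : V) : Prop :=
  G.Adj v w ∧ w ∈ S ∧ rank v < rank w

lemma eq_or_mem_and_rank_lt_of_reflTransGen {v w : V} (h : ReflTransGen (AscStep G rank S) v w) :
    w = v ∨ (w ∈ S ∧ rank v < rank w) := by
  induction h with
  | refl => exact .inl rfl
  | tail _ hstep ih =>
    obtain ⟨-, hS, hlt⟩ := hstep
    rcases ih with rfl | ⟨-, hlt'⟩
    · exact .inr ⟨hS, hlt⟩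
    · exact .inr ⟨hS, hlt'.trans hlt⟩

lemma exists_reflTransGen_filter_not_adj [DecidableRel G.Adj] {d r : V}
    (h : ReflTransGen (AscStep G rank S) d r) (hne : r ≠ d) (hadj : ¬ G.Adj d r) :
    ∃ e, AscStep G rank S d e ∧ rank e ≤ rank r ∧
      ReflTransGen (AscStep G rank {v ∈ S | ¬ G.Adj d v}) e r := by
  induction h with
  | refl => exact absurd rfl hne
  | @tail w r hdw hwr ih =>
    have hr : r ∈ ({v ∈ S | ¬ G.Adj d v} : Finset V) := mem_filter.2 ⟨hwr.2.1, hadj⟩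
    have hstep : AscStep G rank {v ∈ S | ¬ G.Adj d v} w r := ⟨hwr.1, hr, hwr.2.2⟩
    have hwd : w ≠ d := by
      rintro rfl
      exact hadj hwr.1
    by_cases hdw_adj : G.Adj d w
    · obtain ⟨hwS, hlt⟩ := (eq_or_mem_and_rank_lt_of_reflTransGen hdw).resolve_left hwd
      exact ⟨w, ⟨hdw_adj, hwS, hlt⟩, hwr.2.2.le, .single hstep⟩
    · obtain ⟨e, hde, hle, hew⟩ := ih hwd hdw_adj
      exact ⟨e, hde, hle.trans hwr.2.2.le, hew.tail hstep⟩

/-- A chordless walk with increasing ranks and with all vertices after the first one in `S`. -/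
structure IsAscending (rank : V → ℕ) (S : Finset V) {v w : V} (p : G.Walk v w) : Prop where
  isChordless : p.IsChordless
  pairwise_rank_lt : p.support.Pairwise (rank · < rank ·)
  eq_or_mem : ∀ x ∈ p.support, x = v ∨ x ∈ S

lemma IsAscending.rank_lt_of_ne {v w x : V} {p : G.Walk v w} (hp : IsAscending rank S p)
    (hx : x ∈ p.support) (hxv : x ≠ v) : rank v < rank x := by
  have h := hp.pairwise_rank_lt
  rw [← p.cons_tail_support] at h hx
  exact (List.pairwise_cons.1 h).1 x (List.mem_of_ne_of_mem hxv hx)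

lemma IsAscending.rank_lt_of_ne_end {v w x : V} {p : G.Walk v w} (hp : IsAscending rank S p)
    (hx : x ∈ p.support) (hxw : x ≠ w) : rank x < rank w := by
  have h := hp.pairwise_rank_lt
  rw [← p.dropLast_support_concat] at h hx
  have hx' : x ∈ p.support.dropLast :=
    (List.mem_append.1 hx).resolve_right (mt List.mem_singleton.1 hxw)
  exact (List.pairwise_append.1 h).2.2 x hx' w (List.mem_singleton_self w)

lemma IsAscending.isPath {v w : V} {p : G.Walk v w} (hp : IsAscending rank S p) : p.IsPath :=
  p.isPath_def.2 (hp.pairwise_rank_lt.imp fun h => ne_of_apply_ne rank h.ne)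

lemma IsAscending.cons [DecidableRel G.Adj] {d e v : V} {p : G.Walk e v}
    (hp : IsAscending rank {v ∈ S | ¬ G.Adj d v} p) (hde : G.Adj d e) (he : e ∈ S)
    (hlt : rank d < rank e) : IsAscending rank S (p.cons hde) where
  isChordless := isChordless_cons hde hp.isChordless fun x hx hdx =>
    (hp.eq_or_mem x hx).resolve_right fun hxS => (mem_filter.1 hxS).2 hdx
  pairwise_rank_lt := by
    refine List.pairwise_cons.2 ⟨fun x hx => ?_, hp.pairwise_rank_lt⟩
    rcases eq_or_ne x e with rfl | hxe
    · exact hlt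
    · exact hlt.trans (hp.rank_lt_of_ne hx hxe)
  eq_or_mem x hx := by
    rw [SimpleGraph.Walk.support_cons, List.mem_cons] at hx
    refine hx.imp_right fun hx => ?_
    rcases hp.eq_or_mem x hx with rfl | hxS
    · exact he
    · exact (mem_filter.1 hxS).1

variable [Fintype V]

open Classical in
/-- The vertices of rank `i` that can be reached from `E` by ascending steps in `S`. -/
noncomputable def ascReach (G : SimpleGraph V) (rank : V → ℕ) (S E : Finset V) (i : ℕ) :
    Finset V :=
  {v | rank v = i ∧ ∃ e ∈ E, ReflTransGen (AscStep G rank S) e v}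

lemma mem_ascReach {E : Finset V} {i : ℕ} {v : V} :
    v ∈ ascReach G rank S E i ↔ rank v = i ∧ ∃ e ∈ E, ReflTransGen (AscStep G rank S) e v := by
  simp [ascReach]

lemma ascReach_eq_biUnion [DecidableEq V] (E : Finset V) (i : ℕ) :
    ascReach G rank S E i = E.biUnion fun e => ascReach G rank S {e} i := by
  ext v
  simp only [mem_ascReach, mem_biUnion, mem_singleton, exists_eq_left]
  tauto

lemma nonempty_of_ascReach_card_pos {E : Finset V} {i : ℕ} (h : 0 < #(ascReach G rank S E i)) :
    E.Nonempty := by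
  obtain ⟨v, hv⟩ := card_pos.1 h
  obtain ⟨-, e, he, -⟩ := mem_ascReach.1 hv
  exact ⟨e, he⟩

lemma IsCoherent.card_rank_sub_le_card_ascReach {α β : ℝ} (h : IsCoherent G α β) {E : Finset V}
    {b : ℕ} (hα : α ≤ #(ascReach G rank S E b)) :
    #{v ∈ S | rank v = b + 1} - β ≤ #(ascReach G rank S E (b + 1)) := by
  classical
  have hdisj : Disjoint (ascReach G rank S E b) {v ∈ S | rank v = b + 1} :=
    disjoint_left.2 fun v hv hv' => by
      have := (mem_ascReach.1 hv).1
      have := (mem_filter.1 hv').2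
      omega
  refine (h.card_sub_lt_card_coveredBy hdisj hα).le.trans (Nat.cast_le.2 (card_le_card ?_))
  intro v hv
  obtain ⟨hvS, a, ha, hav⟩ := mem_coveredBy.1 hv
  obtain ⟨hvS, hrank⟩ := mem_filter.1 hvS
  obtain ⟨hab, e, he, hea⟩ := mem_ascReach.1 ha
  exact mem_ascReach.2 ⟨hrank, e, he, hea.tail ⟨hav, hvS, by omega⟩⟩

-- Each rank gained shrinks the set of sources by a factor `u`, while coherence restores the
-- number of reached vertices.
lemma IsCoherent.exists_le_card_ascReach_singleton {u η T : ℝ} (h : IsCoherent G (η / u) η)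
    (hη : 0 < η) (hu : 1 ≤ u) (hT : 2 * η ≤ T) {k b : ℕ} {E : Finset V}
    (hE : #E ≤ ⌈u ^ k⌉₊) (hreach : T ≤ #(ascReach G rank S E b))
    (hrank : ∀ i ∈ Ioc b (b + k), T + η ≤ #{v ∈ S | rank v = i}) :
    ∃ e ∈ E, T ≤ #(ascReach G rank S {e} (b + k)) := by
  classical
  induction k generalizing b E with
  | zero =>
    have hne : E.Nonempty := nonempty_of_ascReach_card_pos (G := G) (rank := rank) (S := S)
      (i := b) (by rify; linarith)
    rw [pow_zero, Nat.ceil_one] at hE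
    obtain ⟨e, rfl⟩ := card_eq_one.1 (hE.antisymm hne.card_pos)
    exact ⟨e, mem_singleton_self e, hreach⟩
  | succ k ih =>
    have hE' : (#E : ℝ) ≤ 2 * u * ⌈u ^ k⌉₊ := (Nat.cast_le.2 hE).trans (ceil_pow_succ_le hu k)
    rw [ascReach_eq_biUnion] at hreach
    obtain ⟨F, hFE, hF, hFreach⟩ := exists_subset_card_le_div_le_card_biUnion _ E
      (Nat.ceil_pos.2 (by positivity)) hu hη.le hE' (hT.trans hreach)
    rw [← ascReach_eq_biUnion] at hFreach
    have hnext := hrank (b + 1) (by simp)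
    obtain ⟨e, he, hereach⟩ := ih hF
      (le_trans (by linarith) (h.card_rank_sub_le_card_ascReach hFreach))
      fun i hi => hrank i (by rw [mem_Ioc] at hi ⊢; omega)
    exact ⟨e, hFE he, by rwa [show b + (k + 1) = b + 1 + k by ring]⟩

lemma card_ascReach_singleton_le [DecidableRel G.Adj] {d : V} {i : ℕ} (hd : rank d < i) :
    #(ascReach G rank S {d} i) ≤
      #(ascReach G rank {v ∈ S | ¬ G.Adj d v} {e ∈ S | G.Adj d e ∧ rank e ≤ i ∧ rank d < rank e} i)
        + G.degree d := by
  refine (card_le_card_filter_not_adj_add_degree (G := G) d _).trans ?_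
  gcongr
  intro r hr
  obtain ⟨hr, hdr⟩ := mem_filter.1 hr
  obtain ⟨hri, _, hd', hreach⟩ := mem_ascReach.1 hr
  rw [mem_singleton.1 hd'] at hreach
  have hne : r ≠ d := ne_of_apply_ne rank (by omega)
  obtain ⟨e, ⟨hde, heS, hlt⟩, hle, her⟩ := exists_reflTransGen_filter_not_adj hreach hne hdr
  exact mem_ascReach.2 ⟨hri, e, mem_filter.2 ⟨heS, hde, hri ▸ hle, hlt⟩, her⟩

lemma IsCoherent.exists_isAscending [DecidableRel G.Adj] {u η : ℝ} {m : ℕ}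
    (h : IsCoherent G (η / u) η) (hη : 0 < η) (hu : 1 ≤ u) (hm : 0 < m)
    (hcard : Fintype.card V ≤ u ^ m) (hdeg : ∀ v, G.degree v ≤ η) {q b : ℕ} {E : Finset V}
    (hE : ∀ e ∈ E, rank e ≤ b) (hreach : (q + 2) * η ≤ #(ascReach G rank S E b))
    (hrank : ∀ i ∈ Ioc b (b + q * m), (q + 3) * η ≤ #{v ∈ S | rank v = i}) :
    ∃ e ∈ E, ∃ v, ∃ p : G.Walk e v, p.length = q ∧ IsAscending rank S p := by
  induction q generalizing S b E with
  | zero =>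
    have hpos : 0 < #(ascReach G rank S E b) := by
      rify
      exact lt_of_lt_of_le (by positivity) hreach
    obtain ⟨e, he⟩ := nonempty_of_ascReach_card_pos hpos
    exact ⟨e, he, e, .nil, rfl, by simp [SimpleGraph.Walk.isChordless_iff_forall_mem_edges],
      by simp, by simp⟩
  | succ q ih =>
    push_cast at hreach hrank
    obtain ⟨d, hdE, hd⟩ := h.exists_le_card_ascReach_singleton (T := (q + 3) * η) (k := m) hη hu
      (by nlinarith) ((card_le_univ E).trans (Nat.cast_le.1 (hcard.trans (Nat.le_ceil _))))
      (hreach.trans' (by linarith)) fun i hi => (hrank i (by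
        rw [mem_Ioc] at hi ⊢; exact ⟨hi.1, hi.2.trans (by nlinarith)⟩)).trans' (by linarith)
    have hdeg_d := hdeg d
    have hreach' := card_ascReach_singleton_le (G := G) (S := S)
      (by have := hE d hdE; omega : rank d < b + m)
    rw [← Nat.cast_le (α := ℝ), Nat.cast_add] at hreach'
    obtain ⟨e, he, v, p, hlen, hp⟩ := ih (S := {v ∈ S | ¬ G.Adj d v})
      (b := b + m) (E := {e ∈ S | G.Adj d e ∧ rank e ≤ b + m ∧ rank d < rank e})
      (fun e he => (mem_filter.1 he).2.2.1) (by linarith) fun i hi => by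
        have hle := card_le_card_filter_not_adj_add_degree (G := G) d {v ∈ S | rank v = i}
        rw [filter_comm, ← Nat.cast_le (α := ℝ), Nat.cast_add] at hle
        linarith [hrank i (by rw [mem_Ioc] at hi ⊢; constructor <;> nlinarith)]
    obtain ⟨heS, hde, -, hlt⟩ := mem_filter.1 he
    exact ⟨d, hdE, v, p.cons hde, by simp [hlen], hp.cons hde heS hlt⟩

end Reachability

section Layering

variable {V : Type*} {G : SimpleGraph V} [DecidableRel G.Adj]
  {X D : Finset V} {η T : ℝ}

/-- A partition of a subset of `D` into layers `1, …, N` of size at least `T` (rank `0` marks the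
vertices in no layer), such that every layered vertex has a neighbour in `X` that sees none of the
earlier layers. -/
structure IsLayering (G : SimpleGraph V) (X D : Finset V) (T : ℝ) (N : ℕ) (rank : V → ℕ) :
    Prop where
  rank_le : ∀ v, rank v ≤ N
  mem_of_rank_pos : ∀ v, 0 < rank v → v ∈ D
  le_card : ∀ i ∈ Icc 1 N, T ≤ #{v ∈ D | rank v = i}
  exists_adj : ∀ v, 0 < rank v →
    ∃ x ∈ X, G.Adj x v ∧ ∀ w, 0 < rank w → rank w < rank v → ¬ G.Adj x w

lemma IsLayering.extend [DecidableEq V] {N : ℕ} {rank : V → ℕ} {Y : Finset V} (hYX : Y ⊆ X)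
    (h : IsLayering G X (D \ coveredBy G Y D) T N rank) (hY : T ≤ #(coveredBy G Y D)) :
    IsLayering G X D T (N + 1) fun v => if v ∈ coveredBy G Y D then N + 1 else rank v where
  rank_le v := by
    split_ifs
    · exact le_rfl
    · exact (h.rank_le v).trans N.le_succ
  mem_of_rank_pos v hv := by
    split_ifs at hv with hvY
    · exact (mem_coveredBy.1 hvY).1
    · exact (mem_sdiff.1 (h.mem_of_rank_pos v hv)).1
  le_card i hi := by
    obtain ⟨hi1, hiN⟩ := mem_Icc.1 hi
    rcases hiN.eq_or_lt with rfl | hlt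
    · refine hY.trans (Nat.cast_le.2 (card_le_card fun v hv => ?_))
      exact mem_filter.2 ⟨(mem_coveredBy.1 hv).1, if_pos hv⟩
    · refine (h.le_card i (mem_Icc.2 ⟨hi1, by omega⟩)).trans (Nat.cast_le.2 (card_le_card ?_))
      intro v hv
      obtain ⟨hvD, hvi⟩ := mem_filter.1 hv
      obtain ⟨hvD, hvY⟩ := mem_sdiff.1 hvD
      exact mem_filter.2 ⟨hvD, (if_neg hvY).trans hvi⟩
  exists_adj v hv := by
    by_cases hvY : v ∈ coveredBy G Y D
    · obtain ⟨-, x, hx, hxv⟩ := mem_coveredBy.1 hvY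
      refine ⟨x, hYX hx, hxv, fun w hw hwv hxw => ?_⟩
      by_cases hwY : w ∈ coveredBy G Y D
      · simp [hvY, hwY] at hwv
      · rw [if_neg hwY] at hw
        exact hwY (mem_coveredBy.2 ⟨(mem_sdiff.1 (h.mem_of_rank_pos w hw)).1, x, hx, hxw⟩)
    · rw [if_neg hvY] at hv ⊢
      obtain ⟨x, hx, hxv, hlow⟩ := h.exists_adj v hv
      refine ⟨x, hx, hxv, fun w hw hwv => ?_⟩
      have hwY : w ∉ coveredBy G Y D := by
        intro hwY
        have := h.rank_le v
        rw [if_pos hwY] at hwv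
        omega
      rw [if_neg hwY] at hw hwv
      exact hlow w hw hwv

variable [Fintype V]

lemma card_coveredBy_insert_le [DecidableEq V] (x : V) (X D : Finset V) :
    #(coveredBy G (insert x X) D) ≤ #(coveredBy G X D) + G.degree x := by
  have hsub : coveredBy G (insert x X) D ⊆ coveredBy G X D ∪ {d ∈ D | G.Adj x d} := by
    intro d hd
    obtain ⟨hdD, y, hy, hyd⟩ := mem_coveredBy.1 hd
    rcases mem_insert.1 hy with rfl | hy
    · exact mem_union_right _ (mem_filter.2 ⟨hdD, hyd⟩)
    · exact mem_union_left _ (mem_coveredBy.2 ⟨hdD, y, hy, hyd⟩)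
  calc #(coveredBy G (insert x X) D) ≤ #(coveredBy G X D) + #{d ∈ D | G.Adj x d} :=
        (card_le_card hsub).trans (card_union_le _ _)
    _ ≤ _ := by gcongr; exact card_filter_adj_le_degree x D

lemma exists_subset_le_card_coveredBy_le (hT : 0 ≤ T) (hη : 0 ≤ η)
    (hdeg : ∀ v, G.degree v ≤ η) (hX : T ≤ #(coveredBy G X D)) :
    ∃ Y ⊆ X, T ≤ #(coveredBy G Y D) ∧ #(coveredBy G Y D) ≤ T + η := by
  classical
  induction X using Finset.induction with
  | empty => exact ⟨∅, Subset.rfl, hX, by simpa [coveredBy] using add_nonneg hT hη⟩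
  | insert x X _ ih =>
    rcases le_or_gt T #(coveredBy G X D) with hle | hlt
    · obtain ⟨Y, hYX, hY⟩ := ih hle
      exact ⟨Y, hYX.trans (subset_insert x X), hY⟩
    · refine ⟨insert x X, Subset.rfl, hX, ?_⟩
      have hinsert := card_coveredBy_insert_le (G := G) x X D
      rify at hinsert
      linarith [hdeg x]

lemma exists_isLayering (hT : 0 ≤ T) (hη : 0 ≤ η) (hdeg : ∀ v, G.degree v ≤ η)
    (hX : ∀ d ∈ D, ∃ x ∈ X, G.Adj x d) {N : ℕ} (hD : N * (T + η) ≤ #D) :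
    ∃ rank, IsLayering G X D T N rank := by
  classical
  induction N generalizing D with
  | zero => exact ⟨0, by simp, by simp, by simp, by simp⟩
  | succ N ih =>
    push_cast at hD
    have hNT : 0 ≤ N * (T + η) := by positivity
    obtain ⟨Y, hYX, hY, hY'⟩ := exists_subset_le_card_coveredBy_le hT hη hdeg
      (by rw [coveredBy_eq_self hX]; linarith : T ≤ #(coveredBy G X D))
    have hsplit : #(D \ coveredBy G Y D) + #(coveredBy G Y D) = #D :=
      card_sdiff_add_card_eq_card (filter_subset _ _)
    rify at hsplit
    obtain ⟨rank, hrank⟩ := ih (D := D \ coveredBy G Y D)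
      (fun d hd => hX d (mem_sdiff.1 hd).1) (by linarith)
    exact ⟨_, hrank.extend hYX hY⟩

lemma IsCoherent.exists_chordless_walk_of_covered {u : ℝ} {m q : ℕ} {Y : Finset V}
    (h : IsCoherent G (η / u) η) (hη : 0 < η) (hu : 1 ≤ u) (hm : 0 < m)
    (hcard : Fintype.card V ≤ u ^ m) (hdeg : ∀ v, G.degree v ≤ η) (hq : 0 < q)
    (hYD : Disjoint Y D) (hY : ∀ d ∈ D, ∃ y ∈ Y, G.Adj y d) (hX : ∀ d ∈ D, ∃ x ∈ X, G.Adj x d)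
    (hD : (1 + q * m) * ((q + 4) * η) ≤ #D) :
    ∃ y ∈ Y, ∃ z ∈ D, ∃ p : G.Walk y z, p.length = q ∧ p.IsPath ∧ p.IsChordless ∧
      (∀ w ∈ p.support, w = y ∨ w ∈ D) ∧
      ∃ x ∈ X, G.Adj x z ∧ ∀ w ∈ p.support, w ≠ y → G.Adj x w → w = z := by
  obtain ⟨rank, hrank⟩ := exists_isLayering (G := G) (T := (q + 3) * η) (N := 1 + q * m)
    (by positivity) hη.le hdeg hX (by push_cast; linarith)
  have hY0 : ∀ y ∈ Y, rank y = 0 := fun y hy => Nat.eq_zero_of_not_pos fun hpos =>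
    disjoint_left.1 hYD hy (hrank.mem_of_rank_pos y hpos)
  have hfirst : ({v ∈ D | rank v = 1} : Finset V) ⊆ ascReach G rank D Y 1 := by
    intro v hv
    obtain ⟨hvD, hv1⟩ := mem_filter.1 hv
    obtain ⟨y, hy, hyv⟩ := hY v hvD
    exact mem_ascReach.2 ⟨hv1, y, hy, .single ⟨hyv, hvD, by simp [hY0 y hy, hv1]⟩⟩
  obtain ⟨y, hy, z, p, hlen, hp⟩ := h.exists_isAscending (q := q) (b := 1) hη hu hm hcard hdeg
    (fun y hy => (hY0 y hy).le.trans zero_le_one)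
    (calc (q + 2) * η ≤ (q + 3) * η := by gcongr; norm_num
      _ ≤ #{v ∈ D | rank v = 1} := hrank.le_card 1 (by simp)
      _ ≤ _ := by gcongr)
    (fun i hi => hrank.le_card i (by rw [mem_Ioc] at hi; rw [mem_Icc]; omega))
  have hzy : z ≠ y := by
    rintro rfl
    rw [SimpleGraph.Walk.length_eq_zero_iff.2 (SimpleGraph.Walk.isPath_iff_nil.1 hp.isPath)]
      at hlen
    exact hq.ne hlen
  have hz := hp.rank_lt_of_ne p.end_mem_support hzy
  obtain ⟨x, hx, hxz, hlow⟩ := hrank.exists_adj z (by omega)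
  refine ⟨y, hy, z, hrank.mem_of_rank_pos z (by omega), p, hlen, hp.isPath, hp.isChordless,
    hp.eq_or_mem, x, hx, hxz, fun w hw hwy hxw => ?_⟩
  by_contra hwz
  exact hlow w (by have := hp.rank_lt_of_ne hw hwy; omega) (hp.rank_lt_of_ne_end hw hwz) hxw

end Layering

section Levelling

variable {V : Type} {G : SimpleGraph V} {L : ℕ → Finset V} {k i j : ℕ} {a u v : V}

lemma IsLevelling.eq_of_mem (h : IsLevelling G L k) (hi : i ≤ k) (hj : j ≤ k) (hvi : v ∈ L i)
    (hvj : v ∈ L j) : i = j := by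
  obtain ⟨-, -, hdisj, -⟩ := h
  rcases lt_trichotomy i j with hij | hij | hij
  · exact absurd hvj (disjoint_left.1 (hdisj i j hij hj) hvi)
  · exact hij
  · exact absurd hvi (disjoint_left.1 (hdisj j i hij hi) hvj)

lemma IsLevelling.exists_adj (h : IsLevelling G L k) (hi : i < k) (hv : v ∈ L (i + 1)) :
    ∃ u ∈ L i, G.Adj u v :=
  h.2.2.2.1 (i + 1) i.succ_pos hi v hv

lemma IsLevelling.not_adj (h : IsLevelling G L k) (hij : i + 2 ≤ j) (hj : j ≤ k) (hu : u ∈ L i)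
    (hv : v ∈ L j) : ¬ G.Adj u v :=
  h.2.2.2.2 j (by omega) hj i (by omega) u hu v hv

/-- A chordless path that descends a levelling from a vertex `v` of level `i` to its apex, passing
through one vertex of every level. -/
structure IsDescent (G : SimpleGraph V) (L : ℕ → Finset V) (i : ℕ) {v a : V} (p : G.Walk v a) :
    Prop where
  isPath : p.IsPath
  isChordless : p.IsChordless
  length_eq : p.length = i
  eq_or_mem : ∀ w ∈ p.support, w = v ∨ ∃ j < i, w ∈ L j

lemma IsDescent.exists_mem {p : G.Walk v a} (hp : IsDescent G L i p) (hv : v ∈ L i) {w : V}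
    (hw : w ∈ p.support) : ∃ j ≤ i, w ∈ L j := by
  rcases hp.eq_or_mem w hw with rfl | ⟨j, hj, hwj⟩
  · exact ⟨i, le_rfl, hv⟩
  · exact ⟨j, hj.le, hwj⟩

lemma IsDescent.eq_start_of_adj (h : IsLevelling G L k) (hi : i < k) {p : G.Walk v a}
    (hp : IsDescent G L i p) {x w : V} (hx : x ∈ p.support) (hw : w ∈ L (i + 1))
    (hxw : G.Adj x w) : x = v :=
  (hp.eq_or_mem x hx).resolve_right fun ⟨_, hj, hxj⟩ => h.not_adj (by omega) hi hxj hw hxw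

lemma IsDescent.cons (h : IsLevelling G L k) (hi : i < k) (hv : v ∈ L (i + 1)) (hu : u ∈ L i)
    (hvu : G.Adj v u) {p : G.Walk u a} (hp : IsDescent G L i p) :
    IsDescent G L (i + 1) (p.cons hvu) where
  isPath := by
    refine (SimpleGraph.Walk.cons_isPath_iff hvu p).2 ⟨hp.isPath, fun hvp => ?_⟩
    obtain ⟨j, hj, hvj⟩ := hp.exists_mem hu hvp
    have := h.eq_of_mem hi (by omega) hv hvj
    omega
  isChordless := isChordless_cons hvu hp.isChordless fun _ hx hvx =>
    hp.eq_start_of_adj h hi hx hv hvx.symm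
  length_eq := by simp [hp.length_eq]
  eq_or_mem w hw := by
    rw [SimpleGraph.Walk.support_cons, List.mem_cons] at hw
    refine hw.imp_right fun hw => ?_
    obtain ⟨j, hj, hwj⟩ := hp.exists_mem hu hw
    exact ⟨j, by omega, hwj⟩

lemma IsLevelling.exists_isDescent (h : IsLevelling G L k) (ha : L 0 = {a}) (hi : i ≤ k)
    (hv : v ∈ L i) : ∃ p : G.Walk v a, IsDescent G L i p := by
  induction i generalizing v with
  | zero =>
    obtain rfl : v = a := by simpa [ha] using hv
    exact ⟨.nil, .nil, by simp [SimpleGraph.Walk.isChordless_iff_forall_mem_edges], rfl, by simp⟩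
  | succ i ih =>
    obtain ⟨u, hu, huv⟩ := h.exists_adj hi hv
    obtain ⟨p, hp⟩ := ih (by omega) hu
    exact ⟨p.cons huv.symm, hp.cons h hi hv hu huv.symm⟩

end Levelling

section InducedPathOrCycle

variable {V : Type*} {G : SimpleGraph V} {a b z : V}

/-- `p` is an induced path between distinct vertices or an induced cycle; `copy` only identifies
the end vertices of a closed walk. -/
structure IsInducedPathOrCycle (p : G.Walk a b) : Prop where
  isCycle : ∀ h : a = b, (p.copy rfl h.symm).IsCycle
  isPath : a ≠ b → p.IsPath
  isChordless : p.IsChordless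

lemma isInducedPathOrCycle_append {p : G.Walk a z} {q : G.Walk z b} (hp : p.IsPath)
    (hpc : p.IsChordless) (hq : q.IsPath) (hqc : q.IsChordless) (hlen : 1 < q.length)
    (hmeet : ∀ x ∈ p.support, x ∈ q.support → x = z ∨ (x = a ∧ x = b))
    (hadj : ∀ x ∈ p.support, ∀ y ∈ q.support, G.Adj x y → x ∈ q.support ∨ y ∈ p.support) :
    IsInducedPathOrCycle (p.append q) where
  isCycle h := by
    subst h
    exact isCycle_append hp hq (fun x hxp hxq => (hmeet x hxp hxq).symm.imp_left And.left) hlen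
  isPath hab := isPath_append hp hq fun x hxp hxq =>
    (hmeet x hxp hxq).resolve_right fun h => hab (h.1.symm.trans h.2)
  isChordless := isChordless_append hpc hqc hadj

end InducedPathOrCycle

section LevellingPair

variable {V : Type} {G : SimpleGraph V} {L M : ℕ → Finset V} {s t : ℕ} {a₁ a₂ : V}

/-- Two levellings of heights `s` and `t` that meet only in a common apex, if at all, and such
that no edge joins the heart of the first to the second, except for edges at a common apex. -/
structure IsLevellingPair (G : SimpleGraph V) (L M : ℕ → Finset V) (s t : ℕ) (a₁ a₂ : V) :
    Prop where
  left : IsLevelling G L s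
  right : IsLevelling G M t
  left_apex : L 0 = {a₁}
  right_apex : M 0 = {a₂}
  eq_apex : ∀ {x i j}, i ≤ s → j ≤ t → x ∈ L i → x ∈ M j → x = a₁ ∧ x = a₂
  apex_of_adj : ∀ {x y i j}, i < s → j ≤ t → x ∈ L i → y ∈ M j → G.Adj x y →
    a₁ = a₂ ∧ (x = a₁ ∨ y = a₂)

lemma IsLevellingPair.notMem_base (h : IsLevellingPair G L M s t a₁ a₂) {x : V} {j : ℕ}
    (hj : j ≤ t) (hx : x ∈ M j) : x ∉ L s := by
  intro hxs
  have hx0 : x ∈ L 0 := by rw [h.left_apex, mem_singleton, (h.eq_apex le_rfl hj hxs hx).1]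
  have hs := h.left.1
  have := h.left.eq_of_mem le_rfl s.zero_le hxs hx0
  omega

lemma IsLevellingPair.exists_path_to_right_apex {D : Finset V} {j : ℕ} {y z : V}
    (h : IsLevellingPair G L M s t a₁ a₂) (hj : j ≤ t) (hDL : D ⊆ L s)
    (hDM : ∀ i < j, ∀ w ∈ M i, ∀ d ∈ D, ¬ G.Adj w d) (hy : y ∈ M j) {p : G.Walk y z}
    (hp : p.IsPath) (hpc : p.IsChordless) (hpD : ∀ w ∈ p.support, w = y ∨ w ∈ D) :
    ∃ q : G.Walk z a₂, q.IsPath ∧ q.IsChordless ∧ q.length = p.length + j ∧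
      ∀ w ∈ q.support, (w ∈ p.support ∧ w ∈ D) ∨ ∃ i ≤ t, w ∈ M i := by
  obtain ⟨r, hr⟩ := h.right.exists_isDescent h.right_apex hj hy
  refine ⟨p.reverse.append r, isPath_append hp.reverse hr.isPath fun x hxp hxr => ?_,
    isChordless_append (isChordless_reverse hpc) hr.isChordless fun w hw x hx hwx => ?_,
    by simp [hr.length_eq], fun w hw => ?_⟩
  · obtain ⟨i, hi, hxi⟩ := hr.exists_mem hy hxr
    exact (hpD x (by simpa using hxp)).resolve_right fun hxD =>
      h.notMem_base (hi.trans hj) hxi (hDL hxD)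
  · rw [SimpleGraph.Walk.support_reverse, List.mem_reverse] at hw ⊢
    rcases hpD w hw with rfl | hwD
    · exact .inl r.start_mem_support
    rcases hr.eq_or_mem x hx with rfl | ⟨i, hi, hxi⟩
    · exact .inr p.start_mem_support
    · exact absurd hwx.symm (hDM i hi x hxi w hwD)
  · have hr_level : ∀ w ∈ r.support, ∃ i ≤ t, w ∈ M i := fun w hw =>
      (hr.exists_mem hy hw).imp fun i hi => ⟨hi.1.trans hj, hi.2⟩
    rw [SimpleGraph.Walk.mem_support_append_iff, SimpleGraph.Walk.support_reverse,
      List.mem_reverse] at hw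
    rcases hw with hw | hw
    · rcases hpD w hw with rfl | hwD
      · exact .inr ⟨j, hj, hy⟩
      · exact .inl ⟨hw, hwD⟩
    · exact .inr (hr_level w hw)

lemma IsLevellingPair.exists_isInducedPathOrCycle_of_walk {D : Finset V} {j r : ℕ} {x y z : V}
    (h : IsLevellingPair G L M (r + 1) t a₁ a₂) (hj0 : 0 < j) (hj : j ≤ t) (hDL : D ⊆ L (r + 1))
    (hDM : ∀ i < j, ∀ w ∈ M i, ∀ d ∈ D, ¬ G.Adj w d) (hy : y ∈ M j) (hz : z ∈ D)
    {p : G.Walk y z} (hlen : 0 < p.length) (hp : p.IsPath) (hpc : p.IsChordless)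
    (hpD : ∀ w ∈ p.support, w = y ∨ w ∈ D) (hx : x ∈ L r) (hxz : G.Adj x z)
    (hxp : ∀ w ∈ p.support, w ≠ y → G.Adj x w → w = z) :
    ∃ P : G.Walk a₁ a₂, P.length = r + 1 + (p.length + j) ∧ IsInducedPathOrCycle P ∧
      ∀ w ∈ P.support, (∃ i ≤ r + 1, w ∈ L i) ∨ ∃ i ≤ t, w ∈ M i := by
  obtain ⟨q, hq, hqc, hqlen, hqsupp⟩ := h.exists_path_to_right_apex hj hDL hDM hy hp hpc hpD
  obtain ⟨p', hp'⟩ := h.left.exists_isDescent h.left_apex (by omega) hx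
  have hdesc := hp'.cons h.left r.lt_succ_self (hDL hz) hx hxz.symm
  set P := p'.cons hxz.symm
  refine ⟨P.reverse.append q, by simp [hdesc.length_eq, hqlen],
    isInducedPathOrCycle_append hdesc.isPath.reverse (isChordless_reverse hdesc.isChordless) hq hqc
      (by omega) (fun w hw hwq => ?_) (fun v hv w hw hvw => ?_), fun w hw => ?_⟩
  · rw [SimpleGraph.Walk.support_reverse, List.mem_reverse] at hw
    refine (hdesc.eq_or_mem w hw).imp_right fun ⟨i, hi, hwi⟩ => ?_
    rcases hqsupp w hwq with ⟨-, hwD⟩ | ⟨i', hi', hwM⟩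
    · have := h.left.eq_of_mem hi.le le_rfl hwi (hDL hwD)
      omega
    · exact h.eq_apex hi.le hi' hwi hwM
  · rw [SimpleGraph.Walk.support_reverse, List.mem_reverse] at hv ⊢
    rcases List.mem_cons.1 hv with rfl | hv
    · exact .inl q.start_mem_support
    rcases hqsupp w hw with ⟨hwp, hwD⟩ | ⟨i', hi', hwM⟩
    · obtain rfl := hp'.eq_start_of_adj h.left r.lt_succ_self hv (hDL hwD) hvw
      have hwy : w ≠ y := by
        rintro rfl
        exact h.notMem_base hj hy (hDL hwD)
      exact .inr (hxp w hwp hwy hvw ▸ P.start_mem_support)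
    · obtain ⟨i, hi, hvi⟩ := hp'.exists_mem hx hv
      obtain ⟨rfl, rfl | rfl⟩ := h.apex_of_adj (Nat.lt_succ_of_le hi) hi' hvi hwM hvw
      · exact .inl q.end_mem_support
      · exact .inr P.end_mem_support
  · rw [SimpleGraph.Walk.mem_support_append_iff, SimpleGraph.Walk.support_reverse,
      List.mem_reverse] at hw
    rcases hw with hw | hw
    · exact .inl (hdesc.exists_mem (hDL hz) hw)
    · exact (hqsupp w hw).imp_left fun hwD => ⟨r + 1, le_rfl, hDL hwD.2⟩

variable [Fintype V] [DecidableRel G.Adj]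

lemma IsLevellingPair.exists_first_level {u η K : ℝ} (h : IsLevellingPair G L M s t a₁ a₂)
    (hcoh : IsCoherent G (η / u) η) (hdeg : G.degree a₂ ≤ η) (hMt : η / u ≤ #(M t))
    (hK : t * K + 2 * η ≤ #(L s)) :
    ∃ j ∈ Icc 1 t, ∃ D ⊆ L s, K ≤ #D ∧ (∀ d ∈ D, ∃ y ∈ M j, G.Adj y d) ∧
      ∀ i < j, ∀ w ∈ M i, ∀ d ∈ D, ¬ G.Adj w d := by
  classical
  have htop := hcoh.card_sub_lt_card_coveredBy (A := M t) (B := L s)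
    (disjoint_left.2 fun x hx => h.notMem_base le_rfl hx) hMt
  have hbot : #(coveredBy G (M 0) (L s)) ≤ G.degree a₂ := by
    simpa [h.right_apex, coveredBy] using card_filter_adj_le_degree (G := G) a₂ (L s)
  rw [← Nat.cast_le (α := ℝ)] at hbot
  obtain ⟨j, hj, hle⟩ := exists_le_card_filter_first (fun j => coveredBy G (M j) (L s)) h.right.1
    (K := K) (by linarith)
  refine ⟨j, hj, _, (filter_subset _ _).trans (filter_subset _ _), hle, fun d hd => ?_,
    fun i hi w hw d hd hwd => ?_⟩
  · exact (mem_coveredBy.1 (mem_filter.1 hd).1).2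
  · obtain ⟨hd, hfirst⟩ := mem_filter.1 hd
    exact hfirst i hi (mem_coveredBy.2 ⟨(mem_coveredBy.1 hd).1, w, hw, hwd⟩)

theorem IsLevellingPair.exists_isInducedPathOrCycle {u η : ℝ} {m ℓ Q : ℕ}
    (h : IsLevellingPair G L M s t a₁ a₂) (hcoh : IsCoherent G (η / u) η) (hη : 0 < η)
    (hu : 1 ≤ u) (hm : 0 < m) (hcard : Fintype.card V ≤ u ^ m) (hdeg : ∀ v, G.degree v ≤ η)
    (hℓ : 0 < ℓ) (hQ : ℓ + t = Q + 1) (hMt : η / u ≤ #(M t))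
    (hLs : t * ((1 + Q * m) * ((Q + 4) * η)) + 2 * η ≤ #(L s)) :
    ∃ p : G.Walk a₁ a₂, p.length = ℓ + s + t ∧ IsInducedPathOrCycle p ∧
      ∀ x ∈ p.support, (∃ i ≤ s, x ∈ L i) ∨ ∃ i ≤ t, x ∈ M i := by
  obtain ⟨j, hj, D, hDL, hD, hMD, hfirst⟩ := h.exists_first_level hcoh (hdeg a₂) hMt hLs
  obtain ⟨hj1, hjt⟩ := mem_Icc.1 hj
  obtain ⟨r, rfl⟩ : ∃ r, s = r + 1 := Nat.exists_eq_add_of_le' h.left.1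
  obtain ⟨q, hq⟩ : ∃ q, ℓ + t = q + j := Nat.exists_eq_add_of_le' (by omega)
  obtain ⟨y, hy, z, hz, p, hlen, hp, hpc, hpD, x, hx, hxz, hxp⟩ :=
    hcoh.exists_chordless_walk_of_covered (q := q) hη hu hm hcard hdeg (by omega)
      (disjoint_left.2 fun w hw hwD => h.notMem_base hjt hw (hDL hwD)) hMD
      (fun d hd => h.left.exists_adj r.lt_succ_self (hDL hd))
      (hD.trans' (by gcongr <;> omega))
  obtain ⟨P, hP⟩ := h.exists_isInducedPathOrCycle_of_walk hj1 hjt hDL hfirst hy hz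
    (by omega) hp hpc hpD hx hxz hxp
  exact ⟨P, hP.1.trans (by omega), hP.2⟩

end LevellingPair

section Bounds

lemma mul_mul_add_two_le_pow {m q t : ℕ} (hm : 0 < m) (hq : 0 < q) (ht : 0 < t) :
    t * ((1 + q * m) * (q + 4)) + 2 ≤ (m + 1) ^ ((t + 1) * (q + 1)) := by
  obtain ⟨r, rfl⟩ : ∃ r, t = r + 1 := Nat.exists_eq_add_of_le' ht
  set z := (m + 1) ^ (q + 1) with hz
  have bernoulli : 2 * (1 + q * m) ≤ z := by
    have : 1 + q * m ≤ (m + 1) ^ q := by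
      simpa [add_comm] using one_add_mul_le_pow_of_sq_nonneg (a := m) (by positivity)
        (by positivity) (by positivity) q
    rw [hz, pow_succ, mul_comm]
    exact Nat.mul_le_mul this (by omega)
  have hqm : q ≤ q * m := Nat.le_mul_of_pos_right q hm
  have hsq : (1 + q * m) * (q + 4) + 2 ≤ z ^ 2 := by nlinarith
  calc (r + 1) * ((1 + q * m) * (q + 4)) + 2
      ≤ (r + 1) * ((1 + q * m) * (q + 4) + 2) := by nlinarith
    _ ≤ z ^ r * z ^ 2 := Nat.mul_le_mul (Nat.lt_pow_self (by omega)) hsq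
    _ = (m + 1) ^ ((r + 1 + 1) * (q + 1)) := by rw [hz, ← pow_add, ← pow_mul]; ring_nf

lemma mul_mul_ceil_add_two_le_pow {c : ℝ} (hc : 0 < c) {q t : ℕ} (hq : 0 < q) (ht : 0 < t) :
    t * ((1 + q * ⌈1 / c⌉₊) * (q + 4)) + 2 ≤ (2 + 1 / c) ^ ((t + 1) * (q + 1)) := by
  have hceil : (⌈1 / c⌉₊ : ℝ) + 1 ≤ 2 + 1 / c := by
    linarith [Nat.ceil_lt_add_one (by positivity : 0 ≤ 1 / c)]
  calc (t * ((1 + q * ⌈1 / c⌉₊) * (q + 4)) + 2 : ℝ)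
      ≤ (⌈1 / c⌉₊ + 1) ^ ((t + 1) * (q + 1)) := by
        exact_mod_cast mul_mul_add_two_le_pow (Nat.ceil_pos.2 (by positivity)) hq ht
    _ ≤ (2 + 1 / c) ^ ((t + 1) * (q + 1)) := by gcongr

lemma le_rpow_pow_ceil {n c : ℝ} (hn : 1 ≤ n) (hc : 0 < c) : n ≤ (n ^ c) ^ ⌈1 / c⌉₊ := by
  have hceil : 1 ≤ c * ⌈1 / c⌉₊ := (div_le_iff₀' hc).1 (Nat.le_ceil _)
  calc n = n ^ (1 : ℝ) := (Real.rpow_one n).symm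
    _ ≤ n ^ (c * ⌈1 / c⌉₊) := Real.rpow_le_rpow_of_exponent_le hn hceil
    _ = (n ^ c) ^ ⌈1 / c⌉₊ := Real.rpow_mul_natCast (by positivity) _ _

end Bounds

lemma isLevellingPair_of_inter_eq {V : Type} [DecidableEq V] {G : SimpleGraph V}
    {L M : ℕ → Finset V} {s t : ℕ} {a₁ a₂ : V} (hL : IsLevelling G L s) (hM : IsLevelling G M t)
    (ha₁ : L 0 = {a₁}) (ha₂ : M 0 = {a₂})
    (hint : (range (s + 1)).biUnion L ∩ (range (t + 1)).biUnion M = {a₁} ∩ {a₂})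
    (hanti1 : ∀ x ∈ (range (t + 1)).biUnion M, x ≠ a₂ →
      ∀ y ∈ (range s).biUnion L \ ({a₁} ∩ {a₂}), ¬ G.Adj x y)
    (hanti2 : a₁ ≠ a₂ → ∀ y ∈ (range s).biUnion L, ¬ G.Adj a₂ y) :
    IsLevellingPair G L M s t a₁ a₂ where
  left := hL
  right := hM
  left_apex := ha₁
  right_apex := ha₂
  eq_apex {x i j} hi hj hxL hxM := by
    have hx : x ∈ ({a₁} ∩ {a₂} : Finset V) := hint ▸ mem_inter.2
      ⟨mem_biUnion.2 ⟨i, by simpa [Nat.lt_succ_iff] using hi, hxL⟩,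
        mem_biUnion.2 ⟨j, by simpa [Nat.lt_succ_iff] using hj, hxM⟩⟩
    simpa using hx
  apex_of_adj {x y i j} hi hj hx hy hxy := by
    have hxL : x ∈ (range s).biUnion L := mem_biUnion.2 ⟨i, mem_range.2 hi, hx⟩
    have hyM : y ∈ (range (t + 1)).biUnion M := mem_biUnion.2 ⟨j, mem_range_succ_iff.2 hj, hy⟩
    by_cases hya : y = a₂
    · subst hya
      exact ⟨not_not.1 fun hne => hanti2 hne x hxL hxy.symm, .inr rfl⟩
    · have hxa : x ∈ ({a₁} ∩ {a₂} : Finset V) := by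
        by_contra hxa
        exact hanti1 y hyM hya x (mem_sdiff.2 ⟨hxL, hxa⟩) hxy.symm
      obtain ⟨rfl, rfl⟩ : x = a₁ ∧ x = a₂ := by simpa using hxa
      exact ⟨rfl, .inl rfl⟩

/-- The exponent `1 / c` is arbitrary, and at a common apex `a₁ = a₂`, which is adjacent to all of
`M 1`, that vertex is exempted from `hanti1`, so that the conclusion gives an induced cycle. -/
theorem stmt_13_general {V : Type} [Fintype V] [DecidableEq V] (G : SimpleGraph V)
    [DecidableRel G.Adj] (c : ℝ) (hc : 0 < c) (ℓ s₁ t₁ : ℕ) (hℓ : 0 < ℓ) (d ε : ℝ) (hε0 : 0 < ε)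
    (hεd : (2 + 1 / c) ^ ((t₁ + 1) * (ℓ + t₁)) * ε < d)
    (hsparse : ∀ v : V, (G.degree v : ℝ) < ε * Fintype.card V)
    (hcoherent : IsCoherent G (ε * (Fintype.card V : ℝ) ^ (1 - c)) (ε * Fintype.card V))
    (L M : ℕ → Finset V) (hL : IsLevelling G L s₁) (hM : IsLevelling G M t₁)
    (a₁ a₂ : V) (ha₁ : L 0 = {a₁}) (ha₂ : M 0 = {a₂})
    (hint : ((range (s₁ + 1)).biUnion L) ∩ ((range (t₁ + 1)).biUnion M) = {a₁} ∩ {a₂})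
    (hanti1 : ∀ x ∈ (range (t₁ + 1)).biUnion M, x ≠ a₂ →
      ∀ y ∈ (range s₁).biUnion L \ ({a₁} ∩ {a₂}), ¬ G.Adj x y)
    (hanti2 : a₁ ≠ a₂ → ∀ y ∈ (range s₁).biUnion L, ¬ G.Adj a₂ y)
    (hB1 : d * Fintype.card V ≤ #(L s₁)) (hB2 : d * Fintype.card V ≤ #(M t₁)) :
    ∃ p : G.Walk a₁ a₂, p.length = ℓ + s₁ + t₁ ∧
      (∀ h : a₁ = a₂, (p.copy rfl h.symm).IsCycle) ∧ (a₁ ≠ a₂ → p.IsPath) ∧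
      (∀ x ∈ p.support, x ∈ ((range (s₁ + 1)).biUnion L) ∪ ((range (t₁ + 1)).biUnion M)) ∧
      (∀ x ∈ p.support, ∀ y ∈ p.support, G.Adj x y → s(x, y) ∈ p.edges) := by
  have hpair := isLevellingPair_of_inter_eq hL hM ha₁ ha₂ hint hanti1 hanti2
  have ht : 0 < t₁ := hM.1
  obtain ⟨Q, hQ⟩ : ∃ Q, ℓ + t₁ = Q + 1 := Nat.exists_eq_add_of_le' (by omega)
  have hn : (1 : ℝ) ≤ Fintype.card V := by
    exact_mod_cast Fintype.card_pos_iff.2 ⟨a₁⟩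
  set n : ℝ := (Fintype.card V : ℝ)
  have hη : 0 < ε * n := by positivity
  have hu : 1 ≤ n ^ c := Real.one_le_rpow hn hc.le
  have hbase : t₁ * ((1 + Q * ⌈1 / c⌉₊) * ((Q + 4) * (ε * n))) + 2 * (ε * n) ≤ d * n :=
    calc t₁ * ((1 + Q * ⌈1 / c⌉₊) * ((Q + 4) * (ε * n))) + 2 * (ε * n)
        = (t₁ * ((1 + Q * ⌈1 / c⌉₊) * (Q + 4)) + 2) * ε * n := by ring
      _ ≤ (2 + 1 / c) ^ ((t₁ + 1) * (Q + 1)) * ε * n := by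
        gcongr
        exact mul_mul_ceil_add_two_le_pow hc (by omega) ht
      _ ≤ d * n := by
        rw [← hQ]
        gcongr
  have hbase' : ε * n / n ^ c ≤ d * n := by
    have hnonneg : 0 ≤ t₁ * ((1 + Q * ⌈1 / c⌉₊) * ((Q + 4) * (ε * n))) := by positivity
    exact (div_le_self hη.le hu).trans (by linarith)
  rw [Real.rpow_sub (by positivity), Real.rpow_one, ← mul_div_assoc] at hcoherent
  obtain ⟨p, hlen, hp, hsupp⟩ := hpair.exists_isInducedPathOrCycle hcoherent hη hu
    (Nat.ceil_pos.2 (by positivity)) (le_rpow_pow_ceil hn hc) (fun v => (hsparse v).le) hℓ hQ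
    (hbase'.trans hB2) (hbase.trans hB1)
  refine ⟨p, hlen, hp.isCycle, hp.isPath, fun x hx => ?_, fun x hx y hy hxy =>
    SimpleGraph.Walk.isChordless_iff_forall_mem_edges.1 hp.isChordless hx hy hxy⟩
  simpa [Nat.lt_succ_iff] using hsupp x hx

/-- the pathfinder. -/
theorem stmt_13 {V : Type} [Fintype V] [DecidableEq V] (G : SimpleGraph V) [DecidableRel G.Adj]
    (c : ℝ) (hc : 0 < c) (hci : ∃ m : ℕ, (m : ℝ) * c = 1)
    (ℓ s₁ t₁ : ℕ) (hℓ : 0 < ℓ) (hs : 0 < s₁) (ht : 0 < t₁)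
    (d ε : ℝ) (hd : 0 < d) (hε0 : 0 < ε)
    (hεd : (2 + 1 / c) ^ ((t₁ + 1) * (ℓ + t₁)) * ε < d)
    (hsparse : ∀ v : V, (G.degree v : ℝ) < ε * Fintype.card V)
    (hcoherent : ¬ ∃ A B : Finset V, Disjoint A B ∧
      (∀ a ∈ A, ∀ b ∈ B, ¬ G.Adj a b) ∧
      ε * (Fintype.card V : ℝ) ^ (1 - c) ≤ (A.card : ℝ) ∧
      ε * Fintype.card V ≤ (B.card : ℝ))
    (L M : ℕ → Finset V) (hL : IsLevelling G L s₁) (hM : IsLevelling G M t₁)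
    (a₁ a₂ : V) (ha₁ : L 0 = {a₁}) (ha₂ : M 0 = {a₂})
    (hint : ((Finset.range (s₁ + 1)).biUnion L) ∩ ((Finset.range (t₁ + 1)).biUnion M) =
      ({a₁} : Finset V) ∩ {a₂})
    (hanti1 : ∀ x ∈ (Finset.range (t₁ + 1)).biUnion M, x ≠ a₂ →
      ∀ y ∈ (Finset.range s₁).biUnion L, ¬ G.Adj x y)
    (hanti2 : a₁ ≠ a₂ → ∀ y ∈ (Finset.range s₁).biUnion L, ¬ G.Adj a₂ y)
    (hB1 : d * Fintype.card V ≤ ((L s₁).card : ℝ))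
    (hB2 : d * Fintype.card V ≤ ((M t₁).card : ℝ)) :
    ∃ p : G.Walk a₁ a₂, p.length = ℓ + s₁ + t₁ ∧
      (∀ h : a₁ = a₂, (p.copy rfl h.symm).IsCycle) ∧ (a₁ ≠ a₂ → p.IsPath) ∧
      (∀ x ∈ p.support,
        x ∈ ((Finset.range (s₁ + 1)).biUnion L) ∪ ((Finset.range (t₁ + 1)).biUnion M)) ∧
      (∀ x ∈ p.support, ∀ y ∈ p.support, G.Adj x y → s(x, y) ∈ p.edges) :=
  stmt_13_general G c hc ℓ s₁ t₁ hℓ d ε hε0 hεd hsparse hcoherent L M hL hM a₁ a₂ ha₁ ha₂ hint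
    (fun x hx hxa y hy => hanti1 x hx hxa y (mem_sdiff.1 hy).1) hanti2 hB1 hB2
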